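/- arXiv:2210.08597 — 4 statements merged into one kernel-verified Lean document; each statement's English description precedes it below -/
import Mathlib

section
/- For all u, v in the open unit disk of ℝ² (‖u‖ < 1 and ‖v‖ < 1), one has (1 − ⟨u,v⟩)² ≥ (1 − ‖u‖²)(1 − ‖v‖²), with equality if and only if u = v. (Well-definedness of the Klein-model distance: the quantity (1 − ⟨u,v⟩)/√((1 − ‖u‖²)(1 − ‖v‖²)) is at least 1, and equals 1 exactly on the diagonal.) -/
open RealInnerProductSpace

/-!
With `w = v - u`, expanding `1 - ⟪u, v⟫ = (1 - ‖u‖²) - ⟪u, w⟫` shows that the two sides differ by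
`(1 - ‖u‖²) * ‖w‖² + ‖⟪u, w⟫‖²`. Up to the factor `(1 - ‖u‖²)²` this is the Riemannian metric of the
Klein model at `u`, evaluated at the tangent vector `w`, so it is positive definite for `‖u‖ < 1`.
In complex spaces the same form gives the Bergman metric of the ball, up to a constant factor.
-/

section KleinQuotient

open scoped InnerProductSpace

variable {𝕜 E : Type*} [RCLike 𝕜]

section Seminormed

variable [SeminormedAddCommGroup E] [InnerProductSpace 𝕜 E]

theorem norm_one_sub_inner_sq_eq_add (u v : E) :
    ‖1 - ⟪u, v⟫_𝕜‖ ^ 2 = (1 - ‖u‖ ^ 2) * (1 - ‖v‖ ^ 2) +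
      ((1 - ‖u‖ ^ 2) * ‖v - u‖ ^ 2 + ‖⟪u, v - u⟫_𝕜‖ ^ 2) := by
  obtain ⟨w, rfl⟩ : ∃ w, v = u + w := ⟨v - u, (add_sub_cancel u v).symm⟩
  have inner_expand : 1 - ⟪u, u + w⟫_𝕜 = ((1 - ‖u‖ ^ 2 : ℝ) : 𝕜) - ⟪u, w⟫_𝕜 := by
    rw [inner_add_right, inner_self_eq_norm_sq_to_K]
    push_cast
    ring
  have norm_expand : ‖u + w‖ ^ 2 = ‖u‖ ^ 2 + 2 * RCLike.re ⟪u, w⟫_𝕜 + ‖w‖ ^ 2 :=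
    norm_add_sq u w
  have scalar_expand (r : ℝ) (z : 𝕜) :
      ‖(r : 𝕜) - z‖ ^ 2 = r ^ 2 - 2 * r * RCLike.re z + ‖z‖ ^ 2 := by
    rw [norm_sub_sq (𝕜 := 𝕜), RCLike.norm_ofReal, sq_abs, RCLike.inner_apply', RCLike.conj_ofReal,
      RCLike.re_ofReal_mul, mul_assoc]
  rw [inner_expand, scalar_expand, norm_expand, add_sub_cancel_left]
  ring

theorem one_sub_norm_sq_mul_le_norm_one_sub_inner_sq {u : E} (hu : ‖u‖ ≤ 1) (v : E) :
    (1 - ‖u‖ ^ 2) * (1 - ‖v‖ ^ 2) ≤ ‖1 - ⟪u, v⟫_𝕜‖ ^ 2 := by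
  have hu' : 0 ≤ 1 - ‖u‖ ^ 2 := sub_nonneg.mpr (pow_le_one₀ (norm_nonneg u) hu)
  rw [norm_one_sub_inner_sq_eq_add]
  exact le_add_of_nonneg_right (by positivity)

end Seminormed

variable [NormedAddCommGroup E] [InnerProductSpace 𝕜 E]

theorem norm_one_sub_inner_sq_eq_iff {u v : E} (hu : ‖u‖ < 1) :
    ‖1 - ⟪u, v⟫_𝕜‖ ^ 2 = (1 - ‖u‖ ^ 2) * (1 - ‖v‖ ^ 2) ↔ u = v := by
  have hu' : 0 < 1 - ‖u‖ ^ 2 :=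
    sub_pos.mpr (pow_lt_one₀ (norm_nonneg u) hu two_ne_zero)
  rw [norm_one_sub_inner_sq_eq_add, add_eq_left]
  constructor
  · intro h
    have hprod : (1 - ‖u‖ ^ 2) * ‖v - u‖ ^ 2 = 0 :=
      ((add_eq_zero_iff_of_nonneg (by positivity) (by positivity)).mp h).1
    have hnorm : ‖v - u‖ = 0 := by simpa [hu'.ne'] using hprod
    exact (norm_sub_eq_zero_iff.mp hnorm).symm
  · rintro rfl
    simp

theorem klein_quotient_ge_one_general {u : E} (hu : ‖u‖ < 1) (v : E) :
    (1 - ‖u‖ ^ 2) * (1 - ‖v‖ ^ 2) ≤ ‖1 - ⟪u, v⟫_𝕜‖ ^ 2 ∧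
    (‖1 - ⟪u, v⟫_𝕜‖ ^ 2 = (1 - ‖u‖ ^ 2) * (1 - ‖v‖ ^ 2) ↔ u = v) :=
  ⟨one_sub_norm_sq_mul_le_norm_one_sub_inner_sq hu.le v, norm_one_sub_inner_sq_eq_iff hu⟩

end KleinQuotient

/-- For `u, v` in the open unit disk of `ℝ²`, `(1 - ⟪u,v⟫)² ≥ (1 - ‖u‖²)(1 - ‖v‖²)`,
with equality if and only if `u = v` (well-definedness of the Klein-model distance). -/
theorem klein_quotient_ge_one (u v : EuclideanSpace ℝ (Fin 2))
    (hu : ‖u‖ < 1) (hv : ‖v‖ < 1) :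
    (1 - ‖u‖ ^ 2) * (1 - ‖v‖ ^ 2) ≤ (1 - ⟪u, v⟫) ^ 2 ∧
    ((1 - ⟪u, v⟫) ^ 2 = (1 - ‖u‖ ^ 2) * (1 - ‖v‖ ^ 2) ↔ u = v) := by
  simpa only [Real.norm_eq_abs, sq_abs] using klein_quotient_ge_one_general (𝕜 := ℝ) hu v
end

section
/- For all u, v in the open unit disk of ℝ², cosh(‖u − v‖) ≤ (1 − ⟨u,v⟩)/√((1 − ‖u‖²)(1 − ‖v‖²)); equivalently, the Euclidean distance ‖u − v‖ is at most the Klein-model hyperbolic distance d_K(u,v). (Claim 2 of Lemma D, hyperbolic case κ < 0: the ratio of hyperbolic distance to Euclidean distance in the Klein model is at least 1.) -/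
open RealInnerProductSpace

/-!
Put `t = ‖u - v‖` and `s = ‖u + v‖`. The parallelogram law and polarization turn the arithmetic mean
of `1 - ‖u‖²` and `1 - ‖v‖²` into `1 - (t² + s²) / 4`, and `1 - ⟪u, v⟫` into `1 + (t² - s²) / 4`.
Bounding the square root by this mean and using `1 ≤ cosh t` to discard `s`, it suffices that
`cosh t * (1 - t² / 4) ≤ 1 + t² / 4`. With `t = 2x`, this is `sinh² x ≤ x² cosh² x`, that is
`|tanh x| ≤ |x|`.
-/

theorem abs_sinh_le_abs_mul_cosh (x : ℝ) : |Real.sinh x| ≤ |x| * Real.cosh x := by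
  have deriv_le : ∀ y ∈ Metric.closedBall (0 : ℝ) |x|, ‖deriv Real.sinh y‖ ≤ Real.cosh x := by
    intro y hy
    rw [Real.deriv_sinh, Real.norm_of_nonneg (Real.cosh_pos y).le, Real.cosh_le_cosh]
    exact mem_closedBall_zero_iff.1 hy
  simpa [mul_comm] using (convex_closedBall (0 : ℝ) |x|).norm_image_sub_le_of_norm_deriv_le
    (fun y _ => Real.differentiable_sinh y) deriv_le (x := 0) (y := x) (by simp) (by simp)

theorem cosh_two_mul_mul_one_sub_sq_le (x : ℝ) :
    Real.cosh (2 * x) * (1 - x ^ 2) ≤ 1 + x ^ 2 := by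
  have sinh_sq_le : Real.sinh x ^ 2 ≤ x ^ 2 * Real.cosh x ^ 2 := by
    simpa only [mul_pow, sq_abs] using
      pow_le_pow_left₀ (abs_nonneg _) (abs_sinh_le_abs_mul_cosh x) 2
  rw [Real.cosh_sq] at sinh_sq_le
  rw [Real.cosh_two_mul, Real.cosh_sq]
  linarith

theorem cosh_mul_one_sub_sq_div_four_le (t : ℝ) :
    Real.cosh t * (1 - t ^ 2 / 4) ≤ 1 + t ^ 2 / 4 := by
  convert cosh_two_mul_mul_one_sub_sq_le (t / 2) using 2 <;> ring_nf

theorem sqrt_mul_le_half_add {a b : ℝ} (h : 0 ≤ a + b) : √(a * b) ≤ (a + b) / 2 := by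
  refine Real.sqrt_le_iff.2 ⟨by positivity, ?_⟩
  linarith [four_mul_le_sq_add a b, div_pow (a + b) 2 2]

section InnerProductSpace

variable {E : Type*} [SeminormedAddCommGroup E] [InnerProductSpace ℝ E]

theorem cosh_norm_sub_mul_le_one_sub_inner (u v : E) :
    Real.cosh ‖u - v‖ * (((1 - ‖u‖ ^ 2) + (1 - ‖v‖ ^ 2)) / 2) ≤ 1 - ⟪u, v⟫ := by
  have sub_sq := norm_sub_sq_real u v
  have add_sq := norm_add_sq_real u v
  calc Real.cosh ‖u - v‖ * (((1 - ‖u‖ ^ 2) + (1 - ‖v‖ ^ 2)) / 2)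
      = Real.cosh ‖u - v‖ * (1 - ‖u - v‖ ^ 2 / 4) - Real.cosh ‖u - v‖ * (‖u + v‖ ^ 2 / 4) := by
        rw [← mul_sub]
        congr 1
        linarith
    _ ≤ (1 + ‖u - v‖ ^ 2 / 4) - ‖u + v‖ ^ 2 / 4 := by
        gcongr
        · exact cosh_mul_one_sub_sq_div_four_le _
        · exact le_mul_of_one_le_left (by positivity) (Real.one_le_cosh _)
    _ = 1 - ⟪u, v⟫ := by linarith

theorem cosh_dist_le_klein_general (u v : E) (hu : ‖u‖ < 1) (hv : ‖v‖ < 1) :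
    Real.cosh ‖u - v‖ ≤
      (1 - ⟪u, v⟫) / Real.sqrt ((1 - ‖u‖ ^ 2) * (1 - ‖v‖ ^ 2)) := by
  have u_pos : 0 < 1 - ‖u‖ ^ 2 := sub_pos.2 (pow_lt_one₀ (norm_nonneg u) hu two_ne_zero)
  have v_pos : 0 < 1 - ‖v‖ ^ 2 := sub_pos.2 (pow_lt_one₀ (norm_nonneg v) hv two_ne_zero)
  rw [le_div_iff₀ (by positivity)]
  calc Real.cosh ‖u - v‖ * Real.sqrt ((1 - ‖u‖ ^ 2) * (1 - ‖v‖ ^ 2))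
      ≤ Real.cosh ‖u - v‖ * (((1 - ‖u‖ ^ 2) + (1 - ‖v‖ ^ 2)) / 2) := by
        gcongr
        exact sqrt_mul_le_half_add (by positivity)
    _ ≤ 1 - ⟪u, v⟫ := cosh_norm_sub_mul_le_one_sub_inner u v

end InnerProductSpace

/-- Claim 2 of Lemma D (hyperbolic case): for `u, v` in the open unit disk of `ℝ²`,
`cosh ‖u - v‖ ≤ (1 - ⟪u,v⟫)/√((1 - ‖u‖²)(1 - ‖v‖²))`, i.e. the Euclidean distance is
at most the Klein-model hyperbolic distance. -/
theorem cosh_dist_le_klein (u v : EuclideanSpace ℝ (Fin 2))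
    (hu : ‖u‖ < 1) (hv : ‖v‖ < 1) :
    Real.cosh ‖u - v‖ ≤
      (1 - ⟪u, v⟫) / Real.sqrt ((1 - ‖u‖ ^ 2) * (1 - ‖v‖ ^ 2)) :=
  cosh_dist_le_klein_general u v hu hv
end

section
/- For every δ > 0 there exists ε > 0 with the following property: for all pairwise distinct u, v, w in the open unit disk of ℝ² with ‖u‖ < ε, ‖v‖ < ε, ‖w‖ < ε, setting a = d_K(u,w), b = d_K(v,u), c = d_K(v,w), the hyperbolic angle at v, defined as arccos((cosh b · cosh c − cosh a)/(sinh b · sinh c)), differs from the Euclidean angle ∠ u v w by strictly less than δ. (Claim 1 of Lemma D, hyperbolic case: near the origin the Klein model distorts angles arbitrarily little.) -/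
/-!
Up to a conformal factor, the Klein metric at `v` is the pullback of the Euclidean inner product
under the linear map `T_v` which fixes `v` and scales `vᗮ` by `√(1 - ‖v‖²)`. Geodesics of the
model are straight segments, so the hyperbolic angle at `v` of the triangle `u, v, w` is the
Euclidean angle between `T_v (u - v)` and `T_v (w - v)`. Since `T_v` is a contraction with
`⟪T_v x, x⟫ ≥ √(1 - ‖v‖²) ‖x‖²`, it turns every vector by at most `arcsin ‖v‖`, and the triangle
inequality for angles bounds the distortion by `2 arcsin ‖v‖`.
-/

open RealInnerProductSpace

/-- The quantity `(1 - ⟪u,v⟫)/√((1 - ‖u‖²)(1 - ‖v‖²))`, whose `arcosh` is the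
Klein-model hyperbolic distance `d_K(u,v)`:  `d_K(u,v)` is the unique `t ≥ 0` with
`cosh t = kleinQ u v`. -/
noncomputable def kleinQ (u v : EuclideanSpace ℝ (Fin 2)) : ℝ :=
  (1 - ⟪u, v⟫) / Real.sqrt ((1 - ‖u‖ ^ 2) * (1 - ‖v‖ ^ 2))

open InnerProductGeometry Real
open scoped EuclideanGeometry

theorem arcsin_le_pi_div_two_mul {x : ℝ} (hx₀ : 0 ≤ x) (hx₁ : x ≤ 1) :
    arcsin x ≤ π / 2 * x := by
  have h := mul_le_sin (arcsin_nonneg.2 hx₀) (arcsin_le_pi_div_two x)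
  rw [sin_arcsin (by linarith) hx₁] at h
  calc arcsin x = π / 2 * (2 / π * arcsin x) := by field_simp
    _ ≤ π / 2 * x := by gcongr

section Angle

variable {E : Type*} [NormedAddCommGroup E] [InnerProductSpace ℝ E]

theorem abs_angle_sub_angle_le (x x' y y' : E) :
    |angle x' y' - angle x y| ≤ angle x' x + angle y' y := by
  have upper := angle_le_angle_add_angle x' x y'
  have upper' := angle_le_angle_add_angle x y y'
  have lower := angle_le_angle_add_angle x x' y
  have lower' := angle_le_angle_add_angle x' y' y
  rw [angle_comm y y'] at upper'
  rw [angle_comm x x'] at lower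
  rw [abs_le]
  constructor <;> linarith

theorem angle_le_arccos_of_mul_norm_sq_le_inner {c : ℝ} {x y : E} (hc : 0 ≤ c) (hx : x ≠ 0)
    (hyx : ‖y‖ ≤ ‖x‖) (h : c * ‖x‖ ^ 2 ≤ ⟪y, x⟫) : angle y x ≤ arccos c := by
  rcases eq_or_ne y 0 with rfl | hy
  · have hc' : c ≤ 0 := by
      rw [inner_zero_left] at h
      exact nonpos_of_mul_nonpos_left h (by positivity)
    simpa using arccos_le_arccos hc'
  refine arccos_le_arccos ?_
  have hx' : 0 < ‖x‖ := norm_pos_iff.2 hx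
  have hy' : 0 < ‖y‖ := norm_pos_iff.2 hy
  rw [le_div_iff₀ (mul_pos hy' hx')]
  calc c * (‖y‖ * ‖x‖) ≤ c * (‖x‖ * ‖x‖) := by gcongr
    _ = c * ‖x‖ ^ 2 := by ring
    _ ≤ ⟪y, x⟫ := h

end Angle

section KleinWeight

variable {E : Type*} [SeminormedAddCommGroup E]

/-- The quantity `√(1 - ‖v‖²)` through which `v` enters the formulas of the Klein model: the
reciprocal of the Lorentz factor of the velocity `v`. -/
noncomputable def kleinWeight (v : E) : ℝ := √(1 - ‖v‖ ^ 2)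

variable {v : E}

theorem kleinWeight_nonneg (v : E) : 0 ≤ kleinWeight v := sqrt_nonneg _

theorem one_sub_norm_sq_pos (hv : ‖v‖ < 1) : 0 < 1 - ‖v‖ ^ 2 :=
  sub_pos.2 (pow_lt_one₀ (norm_nonneg v) hv two_ne_zero)

theorem kleinWeight_pos (hv : ‖v‖ < 1) : 0 < kleinWeight v := sqrt_pos.2 (one_sub_norm_sq_pos hv)

theorem kleinWeight_sq (hv : ‖v‖ < 1) : kleinWeight v ^ 2 = 1 - ‖v‖ ^ 2 :=
  sq_sqrt (one_sub_norm_sq_pos hv).le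

theorem arccos_kleinWeight (v : E) : arccos (kleinWeight v) = arcsin ‖v‖ :=
  (arcsin_eq_arccos (norm_nonneg v)).symm

end KleinWeight

section KleinModel

variable {E : Type*} [NormedAddCommGroup E] [InnerProductSpace ℝ E]

/-- The linear map that fixes `v` and scales `vᗮ` by `kleinWeight v`. Up to the factor
`1 - ‖v‖²`, it is the differential at `v` of the hyperbolic isometry moving `v` to the origin, so
that it pulls the Euclidean inner product back to a multiple of the Klein metric at `v`. -/
noncomputable def kleinFrame (v x : E) : E :=
  kleinWeight v • x + (⟪v, x⟫ / (1 + kleinWeight v)) • v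

variable {u v w : E}

theorem inner_kleinFrame_kleinFrame (hv : ‖v‖ < 1) (x y : E) :
    ⟪kleinFrame v x, kleinFrame v y⟫ = (1 - ‖v‖ ^ 2) * ⟪x, y⟫ + ⟪v, x⟫ * ⟪v, y⟫ := by
  have hγ := kleinWeight_nonneg v
  have hv_sq : ‖v‖ ^ 2 = 1 - kleinWeight v ^ 2 := by rw [kleinWeight_sq hv]; ring
  simp only [kleinFrame, inner_add_left, inner_add_right, real_inner_smul_left,
    real_inner_smul_right, real_inner_self_eq_norm_sq, real_inner_comm v x, hv_sq]
  field_simp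
  ring

theorem norm_kleinFrame_le (hv : ‖v‖ < 1) (x : E) : ‖kleinFrame v x‖ ≤ ‖x‖ := by
  refine le_of_sq_le_sq ?_ (norm_nonneg x)
  have cauchy_schwarz : ⟪v, x⟫ * ⟪v, x⟫ ≤ ‖v‖ ^ 2 * ‖x‖ ^ 2 := by
    simpa [real_inner_self_eq_norm_sq] using real_inner_mul_inner_self_le v x
  calc ‖kleinFrame v x‖ ^ 2 = (1 - ‖v‖ ^ 2) * ‖x‖ ^ 2 + ⟪v, x⟫ * ⟪v, x⟫ := by
        rw [← real_inner_self_eq_norm_sq, inner_kleinFrame_kleinFrame hv,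
          real_inner_self_eq_norm_sq]
    _ ≤ ‖x‖ ^ 2 := by linarith

theorem kleinWeight_mul_norm_sq_le_inner_kleinFrame (v x : E) :
    kleinWeight v * ‖x‖ ^ 2 ≤ ⟪kleinFrame v x, x⟫ := by
  have hγ := kleinWeight_nonneg v
  have h : ⟪kleinFrame v x, x⟫ = kleinWeight v * ‖x‖ ^ 2 + ⟪v, x⟫ ^ 2 / (1 + kleinWeight v) := by
    simp only [kleinFrame, inner_add_left, real_inner_smul_left, real_inner_self_eq_norm_sq]
    ring
  rw [h]
  exact le_add_of_nonneg_right (by positivity)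

theorem angle_kleinFrame_self_le (hv : ‖v‖ < 1) {x : E} (hx : x ≠ 0) :
    angle (kleinFrame v x) x ≤ arcsin ‖v‖ := by
  rw [← arccos_kleinWeight]
  exact angle_le_arccos_of_mul_norm_sq_le_inner (kleinWeight_nonneg v) hx
    (norm_kleinFrame_le hv x) (kleinWeight_mul_norm_sq_le_inner_kleinFrame v x)

theorem inner_kleinFrame_sub_kleinFrame_sub (hv : ‖v‖ < 1) (u w : E) :
    ⟪kleinFrame v (u - v), kleinFrame v (w - v)⟫ =
      (1 - ⟪v, u⟫) * (1 - ⟪v, w⟫) - kleinWeight v ^ 2 * (1 - ⟪u, w⟫) := by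
  rw [inner_kleinFrame_kleinFrame hv, kleinWeight_sq hv]
  simp only [inner_sub_left, inner_sub_right, real_inner_self_eq_norm_sq, real_inner_comm v u]
  ring

theorem norm_kleinFrame_sub_sq (hv : ‖v‖ < 1) (hu : ‖u‖ < 1) :
    ‖kleinFrame v (u - v)‖ ^ 2 = (1 - ⟪v, u⟫) ^ 2 - (kleinWeight v * kleinWeight u) ^ 2 := by
  rw [← real_inner_self_eq_norm_sq, inner_kleinFrame_sub_kleinFrame_sub hv,
    real_inner_self_eq_norm_sq, mul_pow, kleinWeight_sq hu]
  ring

theorem kleinWeight_mul_kleinWeight_le (hv : ‖v‖ < 1) (hu : ‖u‖ < 1) :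
    kleinWeight v * kleinWeight u ≤ 1 - ⟪v, u⟫ := by
  have h_inner : ⟪v, u⟫ ≤ 1 := (real_inner_le_norm v u).trans
    (mul_le_one₀ hv.le (norm_nonneg u) hu.le)
  refine le_of_sq_le_sq ?_ (sub_nonneg.2 h_inner)
  rw [← sub_nonneg, ← norm_kleinFrame_sub_sq hv hu]
  positivity

/-- The distance of the Klein model of hyperbolic geometry on the open unit ball of `E`. -/
noncomputable def kleinDist (u v : E) : ℝ :=
  arcosh ((1 - ⟪u, v⟫) / √((1 - ‖u‖ ^ 2) * (1 - ‖v‖ ^ 2)))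

theorem eq_kleinDist_of_cosh_eq {a : ℝ} (ha : 0 ≤ a)
    (h : cosh a = (1 - ⟪u, v⟫) / √((1 - ‖u‖ ^ 2) * (1 - ‖v‖ ^ 2))) : a = kleinDist u v := by
  rw [kleinDist, ← h, arcosh_cosh ha]

theorem kleinDist_eq_arcosh (hv : ‖v‖ < 1) (u : E) :
    kleinDist v u = arcosh ((1 - ⟪v, u⟫) / (kleinWeight v * kleinWeight u)) := by
  rw [kleinDist, sqrt_mul (one_sub_norm_sq_pos hv).le, kleinWeight, kleinWeight]

theorem one_le_one_sub_inner_div_kleinWeight_mul (hv : ‖v‖ < 1) (hu : ‖u‖ < 1) :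
    1 ≤ (1 - ⟪v, u⟫) / (kleinWeight v * kleinWeight u) :=
  (one_le_div (mul_pos (kleinWeight_pos hv) (kleinWeight_pos hu))).2
    (kleinWeight_mul_kleinWeight_le hv hu)

theorem cosh_kleinDist (hv : ‖v‖ < 1) (hu : ‖u‖ < 1) :
    cosh (kleinDist v u) = (1 - ⟪v, u⟫) / (kleinWeight v * kleinWeight u) := by
  rw [kleinDist_eq_arcosh hv, cosh_arcosh (one_le_one_sub_inner_div_kleinWeight_mul hv hu)]

theorem sinh_kleinDist (hv : ‖v‖ < 1) (hu : ‖u‖ < 1) :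
    sinh (kleinDist v u) = ‖kleinFrame v (u - v)‖ / (kleinWeight v * kleinWeight u) := by
  have hγv := kleinWeight_pos hv
  have hγu := kleinWeight_pos hu
  have h_sq : ((1 - ⟪v, u⟫) / (kleinWeight v * kleinWeight u)) ^ 2 - 1 =
      (‖kleinFrame v (u - v)‖ / (kleinWeight v * kleinWeight u)) ^ 2 := by
    rw [div_pow, div_pow, norm_kleinFrame_sub_sq hv hu]
    field_simp
  rw [kleinDist_eq_arcosh hv, sinh_arcosh (one_le_one_sub_inner_div_kleinWeight_mul hv hu),
    h_sq, sqrt_sq (by positivity)]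

/-- The angle of a hyperbolic triangle opposite the side of length `a`, the adjacent sides having
lengths `b` and `c`, as given by the hyperbolic law of cosines; division by zero makes it `π / 2`
when `b = 0` or `c = 0`. -/
noncomputable def hyperbolicAngle (a b c : ℝ) : ℝ :=
  arccos ((cosh b * cosh c - cosh a) / (sinh b * sinh c))

theorem hyperbolicAngle_kleinDist (hu : ‖u‖ < 1) (hv : ‖v‖ < 1) (hw : ‖w‖ < 1) :
    hyperbolicAngle (kleinDist u w) (kleinDist v u) (kleinDist v w) =
      angle (kleinFrame v (u - v)) (kleinFrame v (w - v)) := by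
  have hγu := kleinWeight_pos hu
  have hγv := kleinWeight_pos hv
  have hγw := kleinWeight_pos hw
  have numerator : cosh (kleinDist v u) * cosh (kleinDist v w) - cosh (kleinDist u w) =
      ⟪kleinFrame v (u - v), kleinFrame v (w - v)⟫ /
        (kleinWeight v ^ 2 * kleinWeight u * kleinWeight w) := by
    rw [cosh_kleinDist hv hu, cosh_kleinDist hv hw, cosh_kleinDist hu hw,
      inner_kleinFrame_sub_kleinFrame_sub hv]
    field_simp
  have denominator : sinh (kleinDist v u) * sinh (kleinDist v w) =
      ‖kleinFrame v (u - v)‖ * ‖kleinFrame v (w - v)‖ /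
        (kleinWeight v ^ 2 * kleinWeight u * kleinWeight w) := by
    rw [sinh_kleinDist hv hu, sinh_kleinDist hv hw]
    field_simp
  rw [hyperbolicAngle, numerator, denominator, div_div_div_cancel_right₀ (by positivity), angle]

theorem abs_hyperbolicAngle_sub_angle_le (hu : ‖u‖ < 1) (hv : ‖v‖ < 1) (hw : ‖w‖ < 1)
    (huv : u ≠ v) (hvw : v ≠ w) :
    |hyperbolicAngle (kleinDist u w) (kleinDist v u) (kleinDist v w) - ∠ u v w| ≤
      2 * arcsin ‖v‖ := by
  have hu_turn := angle_kleinFrame_self_le hv (sub_ne_zero.2 huv)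
  have hw_turn := angle_kleinFrame_self_le hv (sub_ne_zero.2 hvw.symm)
  rw [hyperbolicAngle_kleinDist hu hv hw]
  calc |angle (kleinFrame v (u - v)) (kleinFrame v (w - v)) - angle (u - v) (w - v)|
      ≤ angle (kleinFrame v (u - v)) (u - v) + angle (kleinFrame v (w - v)) (w - v) :=
        abs_angle_sub_angle_le _ _ _ _
    _ ≤ 2 * arcsin ‖v‖ := by linarith

theorem klein_angle_distortion_general (hu : ‖u‖ < 1) (hv : ‖v‖ < 1) (hw : ‖w‖ < 1)
    (huv : u ≠ v) (hvw : v ≠ w) :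
    |hyperbolicAngle (kleinDist u w) (kleinDist v u) (kleinDist v w) - ∠ u v w| ≤ π * ‖v‖ :=
  calc |hyperbolicAngle (kleinDist u w) (kleinDist v u) (kleinDist v w) - ∠ u v w|
      ≤ 2 * arcsin ‖v‖ := abs_hyperbolicAngle_sub_angle_le hu hv hw huv hvw
    _ ≤ 2 * (π / 2 * ‖v‖) := by gcongr; exact arcsin_le_pi_div_two_mul (norm_nonneg v) hv.le
    _ = π * ‖v‖ := by ring

end KleinModel

/-- Claim 1 of Lemma D (hyperbolic case): for every `δ > 0` there is `ε > 0` such that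
for pairwise distinct `u, v, w` in the open unit disk with norms `< ε`, the hyperbolic
angle at `v` (computed by the hyperbolic law of cosines from the Klein distances
`a = d_K(u,w)`, `b = d_K(v,u)`, `c = d_K(v,w)`, the unique nonnegative numbers whose
`cosh` equals the corresponding `kleinQ`) differs from the Euclidean angle `∠ u v w`
by strictly less than `δ`. -/
theorem klein_angle_distortion (δ : ℝ) (hδ : 0 < δ) :
    ∃ ε > 0, ∀ u v w : EuclideanSpace ℝ (Fin 2),
      ‖u‖ < 1 → ‖v‖ < 1 → ‖w‖ < 1 → ‖u‖ < ε → ‖v‖ < ε → ‖w‖ < ε →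
      u ≠ v → v ≠ w → u ≠ w →
      ∀ a b c : ℝ, 0 ≤ a → 0 ≤ b → 0 ≤ c →
        Real.cosh a = kleinQ u w → Real.cosh b = kleinQ v u → Real.cosh c = kleinQ v w →
        |Real.arccos ((Real.cosh b * Real.cosh c - Real.cosh a) /
            (Real.sinh b * Real.sinh c)) -
          EuclideanGeometry.angle u v w| < δ := by
  refine ⟨δ / π, by positivity, ?_⟩
  intro u v w hu hv hw _ hvε _ huv hvw _ a b c ha hb hc hca hcb hcc
  rw [eq_kleinDist_of_cosh_eq ha hca, eq_kleinDist_of_cosh_eq hb hcb,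
    eq_kleinDist_of_cosh_eq hc hcc]
  exact (klein_angle_distortion_general hu hv hw huv hvw).trans_lt ((lt_div_iff₀' pi_pos).1 hvε)
end

section
/- Let a, b, c be the side lengths of a spherical triangle on the unit sphere: 0 < b < π, 0 < c < π, 0 ≤ a ≤ π, |b − c| ≤ a ≤ b + c, and a + b + c ≤ 2π. Then (cos a − cos b · cos c)/(sin b · sin c) ≤ (b² + c² − a²)/(2bc); equivalently, the spherical angle opposite the side of length a is at least the corresponding angle of the Euclidean comparison triangle with the same side lengths. (The comparison-angle monotonicity used in Lemma 4.1: in the spherical case, Euclidean comparison angles are smaller than the original angles.) -/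
open Real

/-!
With `u = (a + b - c) / 2` and `v = (a + c - b) / 2`, the half-angle formulas give
`sin² (A / 2) = sin u sin v / (sin b sin c)` for the spherical angle `A` and
`sin² (A' / 2) = u v / (b c)` for the Euclidean one `A'`. The triangle inequalities say
`0 ≤ u ≤ b` and `0 ≤ v ≤ c`, and concavity of the sine on `[0, π]` gives
`u / b ≤ sin u / sin b` and `v / c ≤ sin v / sin c`.
-/

theorem div_mul_le_of_concaveOn {𝕜 : Type*} [Field 𝕜] [LinearOrder 𝕜] [IsStrictOrderedRing 𝕜]
    {s : Set 𝕜} {f : 𝕜 → 𝕜} {x y : 𝕜} (hf : ConcaveOn 𝕜 s f) (h0s : 0 ∈ s) (hf0 : 0 ≤ f 0)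
    (hys : y ∈ s) (hx : 0 ≤ x) (hxy : x ≤ y) (hy : 0 < y) : x / y * f y ≤ f x := by
  have one_sub_nonneg : 0 ≤ 1 - x / y := sub_nonneg.2 ((div_le_one hy).2 hxy)
  calc x / y * f y
      ≤ (1 - x / y) * f 0 + x / y * f y := le_add_of_nonneg_left (mul_nonneg one_sub_nonneg hf0)
    _ ≤ f ((1 - x / y) * 0 + x / y * y) :=
        hf.2 h0s hys one_sub_nonneg (div_nonneg hx hy.le) (sub_add_cancel 1 (x / y))
    _ = f x := by rw [mul_zero, zero_add, div_mul_cancel₀ x hy.ne']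

theorem div_le_sin_div_sin {x y : ℝ} (hx : 0 ≤ x) (hxy : x ≤ y) (hy0 : 0 < y) (hyπ : y < π) :
    x / y ≤ sin x / sin y := by
  rw [le_div_iff₀ (sin_pos_of_pos_of_lt_pi hy0 hyπ)]
  exact div_mul_le_of_concaveOn strictConcaveOn_sin_Icc.concaveOn (Set.left_mem_Icc.2 pi_pos.le)
    sin_zero.ge ⟨hy0.le, hyπ.le⟩ hx hxy hy0

theorem spherical_cos_angle_eq_one_sub (a : ℝ) {b c : ℝ} (hb : sin b ≠ 0) (hc : sin c ≠ 0) :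
    (cos a - cos b * cos c) / (sin b * sin c) =
      1 - 2 * (sin ((a + b - c) / 2) / sin b * (sin ((a + c - b) / 2) / sin c)) := by
  have cos_diff : cos a - cos (b - c) =
      -2 * sin ((a + b - c) / 2) * sin ((a + c - b) / 2) := by
    rw [cos_sub_cos, ← add_sub_assoc, sub_sub_eq_add_sub]
  rw [cos_sub] at cos_diff
  field_simp
  linear_combination cos_diff

theorem euclidean_cos_angle_eq_one_sub {K : Type*} [Field K] [NeZero (2 : K)] (a : K) {b c : K}
    (hb : b ≠ 0) (hc : c ≠ 0) :
    (b ^ 2 + c ^ 2 - a ^ 2) / (2 * b * c) =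
      1 - 2 * ((a + b - c) / 2 / b * ((a + c - b) / 2 / c)) := by
  have h2 : (2 : K) ≠ 0 := two_ne_zero
  field_simp
  ring

theorem spherical_cos_angle_le_euclidean_general (a b c : ℝ)
    (hb0 : 0 < b) (hbπ : b < π) (hc0 : 0 < c) (hcπ : c < π)
    (h1 : |b - c| ≤ a) (h2 : a ≤ b + c) :
    (cos a - cos b * cos c) / (sin b * sin c) ≤ (b ^ 2 + c ^ 2 - a ^ 2) / (2 * b * c) := by
  obtain ⟨hcab, hbac⟩ := abs_le.1 h1
  have hu : 0 ≤ (a + b - c) / 2 := by linarith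
  have hv : 0 ≤ (a + c - b) / 2 := by linarith
  have hub : (a + b - c) / 2 / b ≤ sin ((a + b - c) / 2) / sin b :=
    div_le_sin_div_sin hu (by linarith) hb0 hbπ
  have hvc : (a + c - b) / 2 / c ≤ sin ((a + c - b) / 2) / sin c :=
    div_le_sin_div_sin hv (by linarith) hc0 hcπ
  have half_angle_le : (a + b - c) / 2 / b * ((a + c - b) / 2 / c) ≤
      sin ((a + b - c) / 2) / sin b * (sin ((a + c - b) / 2) / sin c) :=
    mul_le_mul hub hvc (div_nonneg hv hc0.le) ((div_nonneg hu hb0.le).trans hub)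
  rw [spherical_cos_angle_eq_one_sub a (sin_pos_of_pos_of_lt_pi hb0 hbπ).ne'
      (sin_pos_of_pos_of_lt_pi hc0 hcπ).ne',
    euclidean_cos_angle_eq_one_sub a hb0.ne' hc0.ne']
  gcongr

/-- Comparison-angle monotonicity (spherical case): for the side lengths `a, b, c` of a
spherical triangle on the unit sphere, the cosine of the spherical angle opposite `a`
is at most the cosine of the corresponding Euclidean comparison angle; equivalently,
the spherical angle is at least the Euclidean comparison angle. -/
theorem spherical_cos_angle_le_euclidean (a b c : ℝ)
    (hb0 : 0 < b) (hbπ : b < π) (hc0 : 0 < c) (hcπ : c < π)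
    (ha0 : 0 ≤ a) (haπ : a ≤ π)
    (h1 : |b - c| ≤ a) (h2 : a ≤ b + c) (h3 : a + b + c ≤ 2 * π) :
    (Real.cos a - Real.cos b * Real.cos c) / (Real.sin b * Real.sin c) ≤
      (b ^ 2 + c ^ 2 - a ^ 2) / (2 * b * c) :=
  spherical_cos_angle_le_euclidean_general a b c hb0 hbπ hc0 hcπ h1 h2
end
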